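/- For every dimension N ≥ 1, every degree k ∈ ℕ, every s ∈ {1, …, k+1}, every p ∈ [1, +∞], and every ρ > 0, there exists a constant C > 0 depending only on N, ρ, k, s and p such that: for every open bounded set U ⊆ ℝ^N with diameter h_U which is star-shaped with respect to a ball of radius ρ·h_U, every function v smooth on an open neighbourhood of the closure of U, and every m ∈ {0, …, s}, one has |v − π_U^k v|_{W^{m,p}(U)} ≤ C · h_U^{s−m} · |v|_{W^{s,p}(U)}, where π_U^k v is the L^2-projection of v onto polynomials of total degree at most k. -/

import Mathlib

open MeasureTheory Metric Set
open scoped ENNReal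

noncomputable section

/-- `w : ℝ^N → ℝ` is (given by) a multivariate polynomial of total degree at most `k`. -/
def IsPolyDegLE (N k : ℕ) (w : EuclideanSpace ℝ (Fin N) → ℝ) : Prop :=
  ∃ P : MvPolynomial (Fin N) ℝ, P.totalDegree ≤ k ∧ ∀ x, w x = MvPolynomial.eval (fun i => x i) P

/-- `U` is star-shaped with respect to a ball of radius `ρ * diam U`. -/
def StarShapedWrtBall {N : ℕ} (ρ : ℝ) (U : Set (EuclideanSpace ℝ (Fin N))) : Prop :=
  ∃ c, Metric.ball c (ρ * Metric.diam U) ⊆ U ∧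
    ∀ x ∈ Metric.ball c (ρ * Metric.diam U), ∀ y ∈ U, segment ℝ x y ⊆ U

/-- The `W^{m,p}(U)`-seminorm of `v`: the `L^p(U)`-norm of the norm of the `m`-th iterated
derivative. -/
def sobSemi {N : ℕ} (m : ℕ) (p : ℝ≥0∞) (U : Set (EuclideanSpace ℝ (Fin N)))
    (v : EuclideanSpace ℝ (Fin N) → ℝ) : ℝ≥0∞ :=
  eLpNorm (fun x => ‖iteratedFDeriv ℝ m v x‖) p (volume.restrict U)

/-! Let `h` be the diameter of `U` and `q` the polynomial of degree less than `s` for which all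
derivatives of `v - q` of order less than `s` have mean zero on the ball. Such a `q` exists because
the mean of an iterated derivative is symmetric, hence itself an iterated derivative of a
polynomial. A Poincaré inequality, with the mean taken over the ball and proved by integrating along
the segments to points of the ball, then gains a factor `h` for each derivative of `v - q`.

Since `P - q` is the projection of `v - q`, it remains to control the projection. On the
finite-dimensional space of polynomials every derivative is bounded by the `L²`-norm on a ball, with
the right power of `h` by scaling. -/

section Poincare

open Module ProbabilityTheory

-- Jensen's inequality in the fibres, for all exponents at once.
lemma eLpNorm_lintegral_le_eLpNorm_prod {α β : Type*} [MeasurableSpace α] [MeasurableSpace β]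
    {μ : Measure α} {π : Measure β} [SFinite μ] [IsProbabilityMeasure π] {f : α × β → ℝ≥0∞}
    (hf : Measurable f) {p : ℝ≥0∞} (hp : 1 ≤ p) :
    eLpNorm (fun x => ∫⁻ z, f (x, z) ∂π) p μ ≤ eLpNorm f p (μ.prod π) := by
  have jensen (x : α) : ∫⁻ z, f (x, z) ∂π ≤ eLpNorm (fun z => f (x, z)) p π := by
    simpa [eLpNorm_one_eq_lintegral_enorm] using
      eLpNorm_le_eLpNorm_of_exponent_le (μ := π) (f := fun z => f (x, z)) hp
        (hf.comp measurable_prodMk_left).aestronglyMeasurable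
  rcases eq_or_ne p ∞ with rfl | hp_top
  · simp only [eLpNorm_exponent_top] at jensen ⊢
    refine essSup_le_of_ae_le _ ?_
    filter_upwards [Measure.ae_ae_of_ae_prod (enorm_ae_le_eLpNormEssSup f (μ.prod π))] with x hx
    exact (jensen x).trans (essSup_le_of_ae_le _ hx)
  · have hp0 : p ≠ 0 := (zero_lt_one.trans_le hp).ne'
    have hr : 0 < p.toReal := ENNReal.toReal_pos hp0 hp_top
    simp only [eLpNorm_eq_lintegral_rpow_enorm_toReal hp0 hp_top, enorm_eq_self] at jensen ⊢
    rw [lintegral_prod _ (hf.pow_const _).aemeasurable]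
    gcongr with x
    refine (ENNReal.rpow_le_rpow (jensen x) hr.le).trans_eq ?_
    rw [← ENNReal.rpow_mul, one_div_mul_cancel hr.ne', ENNReal.rpow_one]

lemma enorm_sub_le_enorm_mul_lintegral_fderiv {E F : Type*} [NormedAddCommGroup E]
    [NormedSpace ℝ E] [NormedAddCommGroup F] [NormedSpace ℝ F] {U : Set E} (hU : IsOpen U)
    {g : E → F} (hg : ContDiffOn ℝ 1 g U) {x y : E} (hxy : segment ℝ y x ⊆ U) :
    ‖g x - g y‖ₑ ≤
      ‖x - y‖ₑ * ∫⁻ t in Icc (0 : ℝ) 1, ‖fderiv ℝ g ((1 - t) • y + t • x)‖ₑ := by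
  let γ (t : ℝ) : E := (1 - t) • y + t • x
  have hγ_mem (t : ℝ) (ht : t ∈ Icc (0 : ℝ) 1) : γ t ∈ U :=
    hxy ⟨1 - t, t, by linarith [ht.2], ht.1, by ring, rfl⟩
  have hγ_deriv (t : ℝ) : HasDerivAt γ (x - y) t := by
    convert (((hasDerivAt_id' t).const_sub 1).smul_const y).fun_add
      ((hasDerivAt_id' t).smul_const x) using 1
    module
  have hderiv (t : ℝ) (ht : t ∈ Icc (0 : ℝ) 1) : deriv (g ∘ γ) t = fderiv ℝ g (γ t) (x - y) :=
    (((hg.differentiableOn one_ne_zero).differentiableAt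
      (hU.mem_nhds (hγ_mem t ht))).hasFDerivAt.comp_hasDerivAt t (hγ_deriv t)).deriv
  have hγ : ContDiff ℝ 1 γ := by unfold γ; fun_prop
  calc ‖g x - g y‖ₑ = ‖(g ∘ γ) 1 - (g ∘ γ) 0‖ₑ := by simp [γ]
    _ ≤ ∫⁻ t in Icc (0 : ℝ) 1, ‖deriv (g ∘ γ) t‖ₑ :=
      enorm_sub_le_lintegral_deriv_of_contDiffOn_Icc (hg.comp hγ.contDiffOn hγ_mem) zero_le_one
    _ ≤ ∫⁻ t in Icc (0 : ℝ) 1, ‖x - y‖ₑ * ‖fderiv ℝ g (γ t)‖ₑ := by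
      refine setLIntegral_mono' measurableSet_Icc fun t ht => ?_
      rw [hderiv t ht, mul_comm]
      exact ContinuousLinearMap.le_opENorm _ _
    _ = _ := lintegral_const_mul' _ _ enorm_ne_top

lemma enorm_sub_setAverage_le {α F : Type*} [MeasurableSpace α] {μ : Measure α}
    [NormedAddCommGroup F] [NormedSpace ℝ F] [CompleteSpace F] {B : Set α} (hB0 : μ B ≠ 0)
    (hB_top : μ B ≠ ∞) {g : α → F} (hg : IntegrableOn g B μ) (a : F) :
    ‖a - ⨍ y in B, g y ∂μ‖ₑ ≤ ∫⁻ y, ‖a - g y‖ₑ ∂μ[|B] := by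
  have := cond_isProbabilityMeasure_of_finite hB0 hB_top
  have hg' : Integrable g μ[|B] := hg.smul_measure (ENNReal.inv_ne_top.2 hB0)
  calc ‖a - ⨍ y in B, g y ∂μ‖ₑ = ‖∫ y, (a - g y) ∂μ[|B]‖ₑ := by
        rw [integral_sub (integrable_const a) hg', integral_const, probReal_univ, one_smul,
          setAverage_eq', ProbabilityTheory.cond]
    _ ≤ _ := enorm_integral_le_lintegral_enorm _

variable {E : Type*} [NormedAddCommGroup E] [NormedSpace ℝ E] [MeasurableSpace E]

/-- The law of the point `(1 - t) • y + t • x` when `x`, `y` and `t` are drawn independently, with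
`x` distributed according to `μ` on `U`, `y` uniformly in `B` and `t` uniformly in `[0, 1]`. -/
def segmentMeasure (μ : Measure E) (U B : Set E) : Measure E :=
  ((μ.restrict U).prod (μ[|B].prod (volume.restrict (Icc (0 : ℝ) 1)))).map
    fun z => (1 - z.2.2) • z.2.1 + z.2.2 • z.1

variable [FiniteDimensional ℝ E] [BorelSpace E] {μ : Measure E}

lemma ae_segmentMeasure_mem {U B : Set E} (hU : MeasurableSet U) (hB : MeasurableSet B)
    (hseg : ∀ y ∈ B, ∀ x ∈ U, segment ℝ y x ⊆ U) : ∀ᵐ a ∂segmentMeasure μ U B, a ∈ U := by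
  refine (ae_map_iff (p := (· ∈ U)) (by fun_prop) hU).2 ?_
  have hxU := Measure.quasiMeasurePreserving_fst (ν := μ[|B].prod (volume.restrict (Icc (0 : ℝ) 1)))
    |>.ae (ae_restrict_mem (μ := μ) hU)
  have hyB := Measure.quasiMeasurePreserving_fst (ν := volume.restrict (Icc (0 : ℝ) 1))
    |>.ae (ae_cond_mem (μ := μ) hB)
  have ht := Measure.quasiMeasurePreserving_snd (μ := μ[|B])
    |>.ae (ae_restrict_mem (μ := volume) (measurableSet_Icc (a := (0 : ℝ)) (b := 1)))
  filter_upwards [hxU, Measure.quasiMeasurePreserving_snd.ae (hyB.and ht)] with z hx ⟨hy, h0, h1⟩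
  exact hseg _ hy _ hx ⟨1 - z.2.2, z.2.2, sub_nonneg.2 h1, h0, by ring, rfl⟩

variable [μ.IsAddHaarMeasure]

lemma measure_preimage_add_smul_le (a : E) {t : ℝ} (ht : 1 / 2 ≤ t) (S : Set E) :
    μ {x | a + t • x ∈ S} ≤ 2 ^ finrank ℝ E * μ S := by
  have ht0 : 0 < t := by linarith
  calc μ {x | a + t • x ∈ S} = μ ((t • ·) ⁻¹' ((a + ·) ⁻¹' S)) := rfl
    _ = ENNReal.ofReal |(t ^ finrank ℝ E)⁻¹| * μ S := by
      rw [Measure.addHaar_preimage_smul _ ht0.ne', measure_preimage_add]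
    _ ≤ ENNReal.ofReal (2 ^ finrank ℝ E) * μ S := by
      gcongr
      rw [abs_of_pos (by positivity), ← inv_pow]
      gcongr
      rw [inv_le_comm₀ ht0 two_pos]
      linarith
    _ = _ := by rw [ENNReal.ofReal_pow zero_le_two, ENNReal.ofReal_ofNat]

-- For `t ≥ 1/2` integrate over `x` first, for `t ≤ 1/2` over `y`: either way the inner integral
-- only sees a dilation of ratio at least `1/2`.
lemma prod_cond_combination_mem_le {U B : Set E} (hB0 : μ B ≠ 0) (hB : μ B ≠ ∞) (hBU : B ⊆ U)
    {S : Set E} (hS : MeasurableSet S) (t : ℝ) :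
    (μ.restrict U).prod μ[|B] {z | (1 - t) • z.2 + t • z.1 ∈ S} ≤
      2 ^ finrank ℝ E * (μ U / μ B) * μ S := by
  have := cond_isProbabilityMeasure_of_finite hB0 hB
  have hmeas : MeasurableSet {z : E × E | (1 - t) • z.2 + t • z.1 ∈ S} :=
    measurableSet_preimage (by fun_prop) hS
  rcases le_total (1 / 2) t with ht | ht
  · calc (μ.restrict U).prod μ[|B] {z | (1 - t) • z.2 + t • z.1 ∈ S}
        = ∫⁻ y, μ.restrict U {x | (1 - t) • y + t • x ∈ S} ∂μ[|B] :=
          Measure.prod_apply_symm hmeas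
      _ ≤ ∫⁻ _, 2 ^ finrank ℝ E * μ S ∂μ[|B] :=
          lintegral_mono fun y =>
            (Measure.restrict_apply_le _ _).trans (measure_preimage_add_smul_le _ ht S)
      _ = 2 ^ finrank ℝ E * 1 * μ S := by simp
      _ ≤ _ := by
          gcongr
          rw [ENNReal.le_div_iff_mul_le (.inl hB0) (.inl hB), one_mul]
          exact measure_mono hBU
  · have hcond (x : E) : μ[|B] {y | (1 - t) • y + t • x ∈ S} ≤
        (μ B)⁻¹ * (2 ^ finrank ℝ E * μ S) := by
      rw [ProbabilityTheory.cond, Measure.smul_apply, smul_eq_mul]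
      gcongr
      simp only [add_comm _ (t • x)]
      exact (Measure.restrict_apply_le _ _).trans (measure_preimage_add_smul_le _ (by linarith) S)
    calc (μ.restrict U).prod μ[|B] {z | (1 - t) • z.2 + t • z.1 ∈ S}
        = ∫⁻ x in U, μ[|B] {y | (1 - t) • y + t • x ∈ S} ∂μ := Measure.prod_apply hmeas
      _ ≤ ∫⁻ _ in U, (μ B)⁻¹ * (2 ^ finrank ℝ E * μ S) ∂μ := lintegral_mono hcond
      _ = _ := by
          rw [lintegral_const, Measure.restrict_apply_univ, div_eq_mul_inv]
          ring

lemma segmentMeasure_le {U B : Set E} (hU : MeasurableSet U) (hB : MeasurableSet B)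
    (hB0 : μ B ≠ 0) (hB_top : μ B ≠ ∞) (hBU : B ⊆ U)
    (hseg : ∀ y ∈ B, ∀ x ∈ U, segment ℝ y x ⊆ U) :
    segmentMeasure μ U B ≤ (2 ^ finrank ℝ E * (μ U / μ B)) • μ.restrict U := by
  have := cond_isProbabilityMeasure_of_finite hB0 hB_top
  rw [← Measure.restrict_eq_self_of_ae_mem (ae_segmentMeasure_mem hU hB hseg),
    ← Measure.restrict_smul]
  refine Measure.restrict_mono subset_rfl (Measure.le_iff.2 fun S hS => ?_)
  have hmeas : MeasurableSet {w : (E × E) × ℝ | (1 - w.2) • w.1.2 + w.2 • w.1.1 ∈ S} :=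
    measurableSet_preimage (by fun_prop) hS
  calc segmentMeasure μ U B S
      = (((μ.restrict U).prod μ[|B]).prod (volume.restrict (Icc (0 : ℝ) 1)))
          {w | (1 - w.2) • w.1.2 + w.2 • w.1.1 ∈ S} := by
        rw [segmentMeasure, ← Measure.prodAssoc_prod,
          Measure.map_map (by fun_prop) (by fun_prop), Measure.map_apply (by fun_prop) hS]
        rfl
    _ = ∫⁻ t in Icc (0 : ℝ) 1,
          ((μ.restrict U).prod μ[|B]) {w | (1 - t) • w.2 + t • w.1 ∈ S} :=
        Measure.prod_apply_symm hmeas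
    _ ≤ ∫⁻ _ in Icc (0 : ℝ) 1, 2 ^ finrank ℝ E * (μ U / μ B) * μ S :=
        lintegral_mono fun t => prod_cond_combination_mem_le hB0 hB_top hBU hS t
    _ = _ := by simp

lemma eLpNorm_lintegral_segment_le {U B : Set E} (hU : MeasurableSet U) (hB : MeasurableSet B)
    (hB0 : μ B ≠ 0) (hB_top : μ B ≠ ∞) (hBU : B ⊆ U)
    (hseg : ∀ y ∈ B, ∀ x ∈ U, segment ℝ y x ⊆ U) {f : E → ℝ≥0∞} (hf : Measurable f)
    {p : ℝ≥0∞} (hp : 1 ≤ p) :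
    eLpNorm (fun x => ∫⁻ y, (∫⁻ t in Icc (0 : ℝ) 1, f ((1 - t) • y + t • x)) ∂μ[|B])
      p (μ.restrict U) ≤ 2 ^ finrank ℝ E * (μ U / μ B) * eLpNorm f p (μ.restrict U) := by
  set A : ℝ≥0∞ := 2 ^ finrank ℝ E * (μ U / μ B)
  have hA : 1 ≤ A := one_le_mul (one_le_pow₀ one_le_two)
    ((ENNReal.le_div_iff_mul_le (.inl hB0) (.inl hB_top)).2 (by simpa using measure_mono hBU))
  have hA_pow : A ^ (1 / p).toReal ≤ A := by
    refine (ENNReal.rpow_le_rpow_of_exponent_le hA ?_).trans_eq (ENNReal.rpow_one A)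
    exact ENNReal.toReal_mono ENNReal.one_ne_top (by simpa using hp)
  have := cond_isProbabilityMeasure_of_finite hB0 hB_top
  have : IsProbabilityMeasure (volume.restrict (Icc (0 : ℝ) 1)) := ⟨by simp⟩
  let π : Measure (E × ℝ) := μ[|B].prod (volume.restrict (Icc 0 1))
  let φ (z : E × E × ℝ) : E := (1 - z.2.2) • z.2.1 + z.2.2 • z.1
  have hφ : Measurable φ := by unfold φ; fun_prop
  calc eLpNorm (fun x => ∫⁻ y, (∫⁻ t in Icc (0 : ℝ) 1, f ((1 - t) • y + t • x)) ∂μ[|B])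
        p (μ.restrict U)
      = eLpNorm (fun x => ∫⁻ z, (f ∘ φ) (x, z) ∂π) p (μ.restrict U) := by
        congr 1 with x
        exact (lintegral_prod _ ((hf.comp hφ).comp measurable_prodMk_left).aemeasurable).symm
    _ ≤ eLpNorm (f ∘ φ) p ((μ.restrict U).prod π) :=
        eLpNorm_lintegral_le_eLpNorm_prod (hf.comp hφ) hp
    _ = eLpNorm f p (segmentMeasure μ U B) :=
        (eLpNorm_map_measure hf.aestronglyMeasurable hφ.aemeasurable).symm
    _ ≤ A ^ (1 / p).toReal * eLpNorm f p (μ.restrict U) :=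
        eLpNorm_le_of_measure_le_smul (segmentMeasure_le hU hB hB0 hB_top hBU hseg)
    _ ≤ A * eLpNorm f p (μ.restrict U) := by gcongr

lemma poincare_wirtinger {F : Type*} [NormedAddCommGroup F] [NormedSpace ℝ F]
    [CompleteSpace F] {U B : Set E} (hU : IsOpen U) (hU_bdd : Bornology.IsBounded U)
    (hB : MeasurableSet B) (hB0 : μ B ≠ 0) (hBU : B ⊆ U)
    (hseg : ∀ y ∈ B, ∀ x ∈ U, segment ℝ y x ⊆ U) {g : E → F} (hg : ContDiffOn ℝ 1 g U)
    (hgB : IntegrableOn g B μ) {p : ℝ≥0∞} (hp : 1 ≤ p) :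
    eLpNorm (fun x => g x - ⨍ y in B, g y ∂μ) p (μ.restrict U) ≤
      ENNReal.ofReal (diam U) * (2 ^ finrank ℝ E * (μ U / μ B)) *
        eLpNorm (fderiv ℝ g) p (μ.restrict U) := by
  have hB_top : μ B ≠ ∞ := (hU_bdd.subset hBU).measure_lt_top.ne
  have pointwise (x : E) (hx : x ∈ U) : ‖g x - ⨍ y in B, g y ∂μ‖ₑ ≤ ENNReal.ofReal (diam U) *
      ∫⁻ y, (∫⁻ t in Icc (0 : ℝ) 1, ‖fderiv ℝ g ((1 - t) • y + t • x)‖ₑ) ∂μ[|B] := by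
    rw [← lintegral_const_mul' _ _ ENNReal.ofReal_ne_top]
    refine (enorm_sub_setAverage_le hB0 hB_top hgB _).trans (lintegral_mono_ae ?_)
    filter_upwards [ae_cond_mem hB] with y hy
    refine (enorm_sub_le_enorm_mul_lintegral_fderiv hU hg (hseg y hy x hx)).trans ?_
    gcongr
    rw [← edist_eq_enorm_sub, edist_dist]
    exact ENNReal.ofReal_le_ofReal (dist_le_diam_of_mem hU_bdd hx (hBU hy))
  calc eLpNorm (fun x => g x - ⨍ y in B, g y ∂μ) p (μ.restrict U)
      ≤ ENNReal.ofReal (diam U) * eLpNorm (fun x => ∫⁻ y, (∫⁻ t in Icc (0 : ℝ) 1,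
          ‖fderiv ℝ g ((1 - t) • y + t • x)‖ₑ) ∂μ[|B]) p (μ.restrict U) :=
        eLpNorm_le_mul_eLpNorm_of_ae_le_mul'
          (ae_restrict_of_forall_mem hU.measurableSet pointwise) p
    _ ≤ ENNReal.ofReal (diam U) * (2 ^ finrank ℝ E * (μ U / μ B) *
          eLpNorm (fun x => ‖fderiv ℝ g x‖ₑ) p (μ.restrict U)) := by
        gcongr
        exact eLpNorm_lintegral_segment_le hU.measurableSet hB hB0 hB_top hBU hseg
          (measurable_fderiv ℝ g).enorm hp
    _ = _ := by simp only [eLpNorm_enorm, mul_assoc]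

end Poincare

section IteratedFDeriv

variable {E F : Type*} [NormedAddCommGroup E] [NormedSpace ℝ E] [NormedAddCommGroup F]
  [NormedSpace ℝ F] {f : E → F} {x : E}

lemma iteratedFDeriv_succ_apply_eq_fderiv {n : ℕ} (hf : ContDiffAt ℝ (n + 1) f x)
    (m : Fin (n + 1) → E) :
    iteratedFDeriv ℝ (n + 1) f x m =
      fderiv ℝ (fun y => iteratedFDeriv ℝ n f y (Fin.tail m)) x (m 0) := by
  have hd : DifferentiableAt ℝ (iteratedFDeriv ℝ n f) x :=
    (hf.iteratedFDeriv_right (m := 1) (by rw [add_comm])).differentiableAt one_ne_zero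
  rw [iteratedFDeriv_succ_apply_left, fderiv_continuousMultilinear_apply_const_apply hd]

lemma iteratedFDeriv_add_two_apply {n : ℕ} (hf : ContDiffAt ℝ (n + 2) f x) (m : Fin (n + 2) → E) :
    iteratedFDeriv ℝ (n + 2) f x m =
      fderiv ℝ (fderiv ℝ (iteratedFDeriv ℝ n f)) x (m 0) (m 1) (Fin.tail (Fin.tail m)) := by
  have hd : DifferentiableAt ℝ (fderiv ℝ (iteratedFDeriv ℝ n f)) x :=
    ((hf.iteratedFDeriv_right (m := 2) (by rw [add_comm])).fderiv_right (m := 1)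
      (by norm_num)).differentiableAt one_ne_zero
  rw [iteratedFDeriv_succ_apply_eq_fderiv (mod_cast hf)]
  simp only [iteratedFDeriv_succ_apply_left]
  rw [fderiv_continuousMultilinear_apply_const_apply (hd.clm_apply (differentiableAt_const _)),
    fderiv_clm_apply hd (differentiableAt_const _)]
  simp [Fin.tail]

lemma iteratedFDeriv_comp_adjacent_swap (n : ℕ) (hf : ContDiffAt ℝ (n + 1) f x) (i : Fin n)
    (m : Fin (n + 1) → E) :
    iteratedFDeriv ℝ (n + 1) f x (m ∘ Equiv.swap i.castSucc i.succ) =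
      iteratedFDeriv ℝ (n + 1) f x m := by
  induction n generalizing x with
  | zero => exact i.elim0
  | succ n ih =>
    cases i using Fin.cases with
    | zero =>
      have hsymm : IsSymmSndFDerivAt ℝ (iteratedFDeriv ℝ n f) x :=
        (hf.iteratedFDeriv_right (m := 2) (by norm_cast; omega)).isSymmSndFDerivAt (by simp)
      have htail : Fin.tail (Fin.tail (m ∘ Equiv.swap (Fin.castSucc 0) (Fin.succ 0))) =
          Fin.tail (Fin.tail m) := rfl
      rw [iteratedFDeriv_add_two_apply (mod_cast hf), iteratedFDeriv_add_two_apply (mod_cast hf),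
        htail]
      simpa using congrArg (· (Fin.tail (Fin.tail m))) (hsymm (m 1) (m 0))
    | succ j =>
      have htail : Fin.tail (m ∘ Equiv.swap j.succ.castSucc j.succ.succ) =
          Fin.tail m ∘ Equiv.swap j.castSucc j.succ := by
        ext k
        simp [Fin.tail, Equiv.swap_apply_def, apply_ite Fin.succ]
      rw [iteratedFDeriv_succ_apply_eq_fderiv hf, iteratedFDeriv_succ_apply_eq_fderiv hf, htail]
      have hswap : (fun y => iteratedFDeriv ℝ (n + 1) f y
          (Fin.tail m ∘ Equiv.swap j.castSucc j.succ)) =ᶠ[nhds x]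
          fun y => iteratedFDeriv ℝ (n + 1) f y (Fin.tail m) := by
        filter_upwards [(hf.of_le (m := n + 1) (by norm_cast; omega)).eventually
          (by exact_mod_cast ENat.natCast_ne_top (n + 1))]
          with y hy
        exact ih hy j _
      rw [hswap.fderiv_eq]
      rfl

lemma iteratedFDeriv_comp_perm {n : ℕ} (hf : ContDiffAt ℝ n f x) (σ : Equiv.Perm (Fin n))
    (m : Fin n → E) : iteratedFDeriv ℝ n f x (m ∘ σ) = iteratedFDeriv ℝ n f x m := by
  cases n with
  | zero => exact congrArg _ (Subsingleton.elim _ _)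
  | succ n =>
    have hσ : σ ∈ Submonoid.closure
        (Set.range fun i : Fin n => Equiv.swap i.castSucc i.succ) := by
      simp [Equiv.Perm.mclosure_swap_castSucc_succ]
    induction hσ using Submonoid.closure_induction generalizing m with
    | mem _ h =>
      obtain ⟨i, rfl⟩ := h
      exact iteratedFDeriv_comp_adjacent_swap n (mod_cast hf) i m
    | one => rfl
    | mul σ τ _ _ ihσ ihτ => exact (ihτ (m ∘ σ)).trans (ihσ m)

lemma iteratedFDeriv_diagonal_of_symmetric {n : ℕ} {A : E [×n]→L[ℝ] F}
    (hA : ∀ (σ : Equiv.Perm (Fin n)) m, A (m ∘ σ) = A m) :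
    iteratedFDeriv ℝ n (fun y => (n.factorial : ℝ)⁻¹ • A fun _ => y) = fun _ => A := by
  have hA_diff : ContDiff ℝ n fun y => A fun _ => y := A.contDiff.comp (by fun_prop)
  ext x m
  rw [iteratedFDeriv_const_smul_apply' hA_diff.contDiffAt, smul_apply,
    A.iteratedFDeriv_comp_diagonal]
  simp_rw [show ∀ σ : Equiv.Perm (Fin n), (A fun i => m (σ i)) = A m from fun σ => hA σ m]
  simp [Fintype.card_perm, ← Nat.cast_smul_eq_nsmul ℝ, smul_smul, Nat.factorial_ne_zero]

lemma iteratedFDeriv_succ_eq_zero {n : ℕ} {A : E [×n]→L[ℝ] F}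
    (hf : iteratedFDeriv ℝ n f = fun _ => A) : iteratedFDeriv ℝ (n + 1) f = 0 := by
  ext x m
  simp [iteratedFDeriv_succ_apply_left, hf]

lemma continuousOn_iteratedFDeriv_of_isOpen {U : Set E} (hU : IsOpen U) {n : ℕ}
    (hf : ContDiffOn ℝ n f U) : ContinuousOn (iteratedFDeriv ℝ n f) U := fun x hx =>
  ((hf.contDiffAt (hU.mem_nhds hx)).iteratedFDeriv_right (m := 0)
    (by simp)).continuousAt.continuousWithinAt

end IteratedFDeriv

section Polynomial

variable {N k l : ℕ} {u w : EuclideanSpace ℝ (Fin N) → ℝ}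

/-- The space of polynomial functions of total degree at most `k`. -/
def polyDegLE (N k : ℕ) : Submodule ℝ (EuclideanSpace ℝ (Fin N) → ℝ) :=
  (MvPolynomial.restrictTotalDegree (Fin N) ℝ k).map
    (MvPolynomial.aeval fun i (x : EuclideanSpace ℝ (Fin N)) => x i).toLinearMap

instance : FiniteDimensional ℝ (polyDegLE N k) := by unfold polyDegLE; infer_instance

lemma mem_polyDegLE : w ∈ polyDegLE N k ↔ IsPolyDegLE N k w := by
  have aeval_apply (P : MvPolynomial (Fin N) ℝ) (x : EuclideanSpace ℝ (Fin N)) :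
      MvPolynomial.aeval (fun i (y : EuclideanSpace ℝ (Fin N)) => y i) P x =
        MvPolynomial.eval (fun i => x i) P := by
    induction P using MvPolynomial.induction_on <;> simp_all
  simp only [polyDegLE, Submodule.mem_map, MvPolynomial.mem_restrictTotalDegree,
    AlgHom.toLinearMap_apply, IsPolyDegLE, funext_iff, aeval_apply, eq_comm]

namespace IsPolyDegLE

lemma contDiff (hw : IsPolyDegLE N k w) {n : WithTop ℕ∞} : ContDiff ℝ n w := by
  obtain ⟨P, -, hP⟩ := hw
  simp only [MvPolynomial.eval_eq'] at hP
  rw [funext hP]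
  fun_prop

lemma continuous (hw : IsPolyDegLE N k w) : Continuous w := hw.contDiff (n := 0) |>.continuous

lemma mono (hw : IsPolyDegLE N k w) (h : k ≤ l) : IsPolyDegLE N l w := by
  obtain ⟨P, hdeg, hP⟩ := hw
  exact ⟨P, hdeg.trans h, hP⟩

lemma add (hw : IsPolyDegLE N k w) (hu : IsPolyDegLE N k u) :
    IsPolyDegLE N k fun x => w x + u x :=
  mem_polyDegLE.1 (add_mem (mem_polyDegLE.2 hw) (mem_polyDegLE.2 hu))

lemma sub (hw : IsPolyDegLE N k w) (hu : IsPolyDegLE N k u) :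
    IsPolyDegLE N k fun x => w x - u x :=
  mem_polyDegLE.1 (sub_mem (mem_polyDegLE.2 hw) (mem_polyDegLE.2 hu))

lemma const_mul (hw : IsPolyDegLE N k w) (a : ℝ) : IsPolyDegLE N k fun x => a * w x :=
  mem_polyDegLE.1 (Submodule.smul_mem _ a (mem_polyDegLE.2 hw))

lemma sum {ι : Type*} {s : Finset ι} {w : ι → EuclideanSpace ℝ (Fin N) → ℝ}
    (hw : ∀ i ∈ s, IsPolyDegLE N k (w i)) : IsPolyDegLE N k fun x => ∑ i ∈ s, w i x := by
  simpa [← mem_polyDegLE, Finset.sum_fn] using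
    sum_mem (S := polyDegLE N k) fun i hi => mem_polyDegLE.2 (hw i hi)

lemma const (a : ℝ) : IsPolyDegLE N k fun _ => a := ⟨MvPolynomial.C a, by simp, by simp⟩

lemma coord (i : Fin N) : IsPolyDegLE N 1 fun x => x i := ⟨MvPolynomial.X i, by simp, by simp⟩

lemma prod {ι : Type*} {s : Finset ι} {d : ι → ℕ} {w : ι → EuclideanSpace ℝ (Fin N) → ℝ}
    (hw : ∀ i ∈ s, IsPolyDegLE N (d i) (w i)) :
    IsPolyDegLE N (∑ i ∈ s, d i) fun x => ∏ i ∈ s, w i x := by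
  choose! P hdeg hP using hw
  refine ⟨∏ i ∈ s, P i, (MvPolynomial.totalDegree_finsetProd _ _).trans
    (Finset.sum_le_sum hdeg), fun x => ?_⟩
  rw [map_prod]
  exact Finset.prod_congr rfl fun i hi => hP i hi x

lemma pow (hw : IsPolyDegLE N k w) (n : ℕ) : IsPolyDegLE N (n * k) fun x => w x ^ n := by
  simpa using prod (s := Finset.range n) fun _ _ => hw

lemma comp {M : ℕ} {g : EuclideanSpace ℝ (Fin M) → EuclideanSpace ℝ (Fin N)}
    (hw : IsPolyDegLE N k w) (hg : ∀ i, IsPolyDegLE M l fun x => g x i) :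
    IsPolyDegLE M (k * l) fun x => w (g x) := by
  obtain ⟨P, hdeg, hP⟩ := hw
  simp only [hP, MvPolynomial.eval_eq']
  refine sum fun d hd => const_mul (mono (prod fun i _ => (hg i).pow (d i)) ?_) _
  rw [← Finset.sum_mul]
  gcongr
  refine le_trans (le_of_eq ?_) ((MvPolynomial.le_totalDegree hd).trans hdeg)
  exact (Finsupp.sum_fintype d (fun _ e => e) fun _ => rfl).symm

lemma diagonal {n : ℕ} (A : EuclideanSpace ℝ (Fin N) [×n]→L[ℝ] ℝ) :
    IsPolyDegLE N n fun x => A fun _ => x := by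
  have expand (x : EuclideanSpace ℝ (Fin N)) : (A fun _ => x) =
      ∑ r : Fin n → Fin N, A (fun i => EuclideanSpace.single (r i) 1) * ∏ i, x (r i) := by
    have hx : x = ∑ i, x i • EuclideanSpace.single i (1 : ℝ) := by
      ext j
      simp [Finset.sum_apply, Pi.single_apply]
    conv_lhs => rw [hx]
    rw [A.map_sum (g := fun _ i => x i • EuclideanSpace.single i (1 : ℝ))]
    refine Finset.sum_congr rfl fun r _ => ?_
    rw [A.map_smul_univ (fun i => x (r i)) (fun i => EuclideanSpace.single (r i) 1), smul_eq_mul,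
      mul_comm]
  simp only [expand]
  refine sum fun r _ => const_mul ?_ _
  simpa using prod (s := Finset.univ) fun i _ => coord (r i)

end IsPolyDegLE
end Polynomial

section Moments

variable {N : ℕ} {U K : Set (EuclideanSpace ℝ (Fin N))} {v : EuclideanSpace ℝ (Fin N) → ℝ} {n : ℕ}

lemma integrableOn_iteratedFDeriv (hU : IsOpen U) (hK : IsCompact K) (hKU : K ⊆ U)
    (hv : ContDiffOn ℝ n v U) : IntegrableOn (iteratedFDeriv ℝ n v) K :=
  ((continuousOn_iteratedFDeriv_of_isOpen hU hv).mono hKU).integrableOn_compact hK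

lemma setAverage_iteratedFDeriv_comp_perm (hU : IsOpen U) (hK : IsCompact K) (hKU : K ⊆ U)
    (hv : ContDiffOn ℝ n v U) (σ : Equiv.Perm (Fin n)) (m : Fin n → EuclideanSpace ℝ (Fin N)) :
    (⨍ y in K, iteratedFDeriv ℝ n v y) (m ∘ σ) = (⨍ y in K, iteratedFDeriv ℝ n v y) m := by
  have hint := integrableOn_iteratedFDeriv hU hK hKU hv
  rw [setAverage_eq, smul_apply, smul_apply, ContinuousMultilinearMap.integral_apply hint,
    ContinuousMultilinearMap.integral_apply hint]
  congr 1
  exact setIntegral_congr_fun hK.measurableSet fun y hy =>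
    iteratedFDeriv_comp_perm (hv.contDiffAt (hU.mem_nhds (hKU hy))) σ m

lemma exists_setAverage_iteratedFDeriv_sub_eq_zero (hU : IsOpen U) (hK : IsCompact K)
    (hKU : K ⊆ U) (hv : ContDiffOn ℝ n v U) :
    ∃ q, IsPolyDegLE N (n - 1) q ∧ iteratedFDeriv ℝ n q = 0 ∧
      ∀ j < n, ⨍ y in K, iteratedFDeriv ℝ j (fun x => v x - q x) y = 0 := by
  induction n generalizing v with
  | zero => exact ⟨fun _ => 0, .const 0, iteratedFDeriv_fun_zero, by simp⟩
  | succ n ih =>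
    have hvn : ContDiffOn ℝ n v U := hv.of_le (by norm_cast; omega)
    set A := ⨍ y in K, iteratedFDeriv ℝ n v y
    let r (x : EuclideanSpace ℝ (Fin N)) : ℝ := (n.factorial : ℝ)⁻¹ * A fun _ => x
    have hr : IsPolyDegLE N n r := (IsPolyDegLE.diagonal A).const_mul _
    have hDr : iteratedFDeriv ℝ n r = fun _ => A :=
      iteratedFDeriv_diagonal_of_symmetric (setAverage_iteratedFDeriv_comp_perm hU hK hKU hvn)
    obtain ⟨q, hq, hDq, hq_avg⟩ := ih (hvn.sub hr.contDiff.contDiffOn)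
    have hDrq : iteratedFDeriv ℝ n (fun x => r x + q x) = fun _ => A := by
      ext1 x
      rw [fun_iteratedFDeriv_add_apply hr.contDiff.contDiffAt hq.contDiff.contDiffAt, hDr, hDq]
      simp
    refine ⟨fun x => r x + q x, hr.add (hq.mono (by omega)), iteratedFDeriv_succ_eq_zero hDrq,
      fun j hj => ?_⟩
    rcases Nat.lt_succ_iff_lt_or_eq.1 hj with hj | rfl
    · simpa only [sub_sub] using hq_avg j hj
    · have hD (y) (hy : y ∈ K) :
          iteratedFDeriv ℝ j (fun x => v x - (r x + q x)) y = iteratedFDeriv ℝ j v y - A := by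
        rw [fun_iteratedFDeriv_sub_apply (hvn.contDiffAt (hU.mem_nhds (hKU hy)))
          (hr.contDiff.add hq.contDiff).contDiffAt, hDrq]
      rw [setAverage_congr_fun hK.measurableSet (ae_of_all _ hD), setAverage_eq,
        setAverage_sub_setAverage hK.measure_lt_top.ne, smul_zero]

end Moments

section BrambleHilbert

variable {N : ℕ} {U : Set (EuclideanSpace ℝ (Fin N))} {v : EuclideanSpace ℝ (Fin N) → ℝ}
  {ρ : ℝ} {c : EuclideanSpace ℝ (Fin N)}

lemma volume_div_volume_closedBall_le (hU : Bornology.IsBounded U) (hdiam : 0 < diam U)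
    (hc : c ∈ U) (hρ : 0 < ρ) :
    volume U / volume (closedBall c (ρ / 2 * diam U)) ≤ ENNReal.ofReal ((2 / ρ) ^ N) := by
  have hU_le : volume U ≤ volume (closedBall c (diam U)) :=
    measure_mono fun x hx => dist_le_diam_of_mem hU hx hc
  refine ENNReal.div_le_of_le_mul (hU_le.trans_eq ?_)
  rw [Measure.addHaar_closedBall _ _ hdiam.le, Measure.addHaar_closedBall _ _ (by positivity),
    ← mul_assoc, ← ENNReal.ofReal_mul (by positivity), finrank_euclideanSpace_fin, ← mul_pow]
  congr 3
  field_simp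

lemma sobSemi_eq_eLpNorm (m : ℕ) (p : ℝ≥0∞) :
    sobSemi m p U v = eLpNorm (iteratedFDeriv ℝ m v) p (volume.restrict U) :=
  eLpNorm_norm _

lemma sobSemi_succ_eq_eLpNorm_fderiv (m : ℕ) (p : ℝ≥0∞) :
    sobSemi (m + 1) p U v = eLpNorm (fderiv ℝ (iteratedFDeriv ℝ m v)) p (volume.restrict U) := by
  rw [← eLpNorm_norm (fderiv ℝ (iteratedFDeriv ℝ m v))]
  simp only [sobSemi, norm_fderiv_iteratedFDeriv]

lemma sobSemi_zero (p : ℝ≥0∞) : sobSemi 0 p U v = eLpNorm v p (volume.restrict U) := by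
  simp only [sobSemi, norm_iteratedFDeriv_zero]
  exact eLpNorm_norm v

lemma sobSemi_sub_le (hU : IsOpen U) {m : ℕ} {u w : EuclideanSpace ℝ (Fin N) → ℝ}
    (hu : ContDiffOn ℝ m u U) (hw : ContDiffOn ℝ m w U) {p : ℝ≥0∞} (hp : 1 ≤ p) :
    sobSemi m p U (fun x => u x - w x) ≤ sobSemi m p U u + sobSemi m p U w := by
  simp only [sobSemi_eq_eLpNorm]
  rw [eLpNorm_congr_ae (ae_restrict_of_forall_mem hU.measurableSet fun x hx =>
    fun_iteratedFDeriv_sub_apply (hu.contDiffAt (hU.mem_nhds hx)) (hw.contDiffAt (hU.mem_nhds hx)))]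
  exact eLpNorm_sub_le
    ((continuousOn_iteratedFDeriv_of_isOpen hU hu).aestronglyMeasurable hU.measurableSet)
    ((continuousOn_iteratedFDeriv_of_isOpen hU hw).aestronglyMeasurable hU.measurableSet) hp

lemma sobSemi_le_mul_sobSemi_succ (hU : IsOpen U) (hU_bdd : Bornology.IsBounded U)
    (hdiam : 0 < diam U) (hρ : 0 < ρ) (hball : ball c (ρ * diam U) ⊆ U)
    (hseg : ∀ x ∈ ball c (ρ * diam U), ∀ y ∈ U, segment ℝ x y ⊆ U) {m : ℕ}
    (hv : ContDiffOn ℝ (m + 1) v U)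
    (havg : ⨍ y in closedBall c (ρ / 2 * diam U), iteratedFDeriv ℝ m v y = 0)
    {p : ℝ≥0∞} (hp : 1 ≤ p) :
    sobSemi m p U v ≤ ENNReal.ofReal ((4 / ρ) ^ N * diam U) * sobSemi (m + 1) p U v := by
  set K := closedBall c (ρ / 2 * diam U)
  have hK_ball : K ⊆ ball c (ρ * diam U) := closedBall_subset_ball (by nlinarith)
  have hKU : K ⊆ U := hK_ball.trans hball
  have hK_compact : IsCompact K := isCompact_closedBall _ _
  have hK0 : volume K ≠ 0 := (measure_closedBall_pos _ _ (by positivity)).ne'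
  have hDv : ContDiffOn ℝ 1 (iteratedFDeriv ℝ m v) U := fun x hx =>
    ((hv.contDiffAt (hU.mem_nhds hx)).iteratedFDeriv_right (by rw [add_comm])).contDiffWithinAt
  have poincare := poincare_wirtinger hU hU_bdd hK_compact.measurableSet hK0 hKU
    (fun y hy => hseg y (hK_ball hy)) hDv
    (integrableOn_iteratedFDeriv hU hK_compact hKU (hv.of_le (by norm_cast; omega))) hp
  simp only [havg, sub_zero, ← sobSemi_succ_eq_eLpNorm_fderiv, ← sobSemi_eq_eLpNorm,
    finrank_euclideanSpace_fin] at poincare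
  refine poincare.trans ?_
  gcongr
  have hratio := volume_div_volume_closedBall_le hU_bdd hdiam
    (hball (mem_ball_self (by positivity))) hρ
  calc ENNReal.ofReal (diam U) * (2 ^ N * (volume U / volume K))
      ≤ ENNReal.ofReal (diam U) * (ENNReal.ofReal (2 ^ N) * ENNReal.ofReal ((2 / ρ) ^ N)) := by
        gcongr
        rw [ENNReal.ofReal_pow zero_le_two, ENNReal.ofReal_ofNat]
    _ = ENNReal.ofReal ((4 / ρ) ^ N * diam U) := by
        rw [← ENNReal.ofReal_mul (by positivity), ← ENNReal.ofReal_mul (by positivity), ← mul_pow,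
          mul_comm]
        congr 3
        ring

lemma sobSemi_le_pow_mul_sobSemi_add (hU : IsOpen U) (hU_bdd : Bornology.IsBounded U)
    (hdiam : 0 < diam U) (hρ : 0 < ρ) (hball : ball c (ρ * diam U) ⊆ U)
    (hseg : ∀ x ∈ ball c (ρ * diam U), ∀ y ∈ U, segment ℝ x y ⊆ U) {m d : ℕ}
    (hv : ContDiffOn ℝ (m + d : ℕ) v U)
    (havg : ∀ j < m + d, ⨍ y in closedBall c (ρ / 2 * diam U), iteratedFDeriv ℝ j v y = 0)
    {p : ℝ≥0∞} (hp : 1 ≤ p) :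
    sobSemi m p U v ≤ ENNReal.ofReal (((4 / ρ) ^ N * diam U) ^ d) * sobSemi (m + d) p U v := by
  induction d with
  | zero => simp
  | succ d ih =>
    calc sobSemi m p U v
        ≤ ENNReal.ofReal (((4 / ρ) ^ N * diam U) ^ d) * sobSemi (m + d) p U v :=
          ih (hv.of_le (by norm_cast; omega)) fun j hj => havg j (by omega)
      _ ≤ ENNReal.ofReal (((4 / ρ) ^ N * diam U) ^ d) *
            (ENNReal.ofReal ((4 / ρ) ^ N * diam U) * sobSemi (m + d + 1) p U v) := by
          gcongr
          exact sobSemi_le_mul_sobSemi_succ hU hU_bdd hdiam hρ hball hseg (mod_cast hv)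
            (havg _ (by omega)) hp
      _ = _ := by rw [← mul_assoc, ← ENNReal.ofReal_mul (by positivity), ← pow_succ, add_assoc]

theorem bramble_hilbert (hU : IsOpen U) (hU_bdd : Bornology.IsBounded U) (hdiam : 0 < diam U)
    (hρ : 0 < ρ) (hstar : StarShapedWrtBall ρ U) {s : ℕ} (hv : ContDiffOn ℝ s v U) :
    ∃ q, IsPolyDegLE N (s - 1) q ∧ ∀ p : ℝ≥0∞, 1 ≤ p → ∀ m ≤ s,
      sobSemi m p U (fun x => v x - q x) ≤
        ENNReal.ofReal (((4 / ρ) ^ N * diam U) ^ (s - m)) * sobSemi s p U v := by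
  obtain ⟨c, hball, hseg⟩ := hstar
  have hKU : closedBall c (ρ / 2 * diam U) ⊆ U :=
    (closedBall_subset_ball (by nlinarith)).trans hball
  obtain ⟨q, hq, hDq, hq_avg⟩ :=
    exists_setAverage_iteratedFDeriv_sub_eq_zero hU (isCompact_closedBall _ _) hKU hv
  refine ⟨q, hq, fun p hp m hm => ?_⟩
  obtain ⟨d, rfl⟩ := Nat.exists_eq_add_of_le hm
  have hD_eq (x) (hx : x ∈ U) :
      iteratedFDeriv ℝ (m + d) (fun y => v y - q y) x = iteratedFDeriv ℝ (m + d) v x := by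
    rw [fun_iteratedFDeriv_sub_apply (hv.contDiffAt (hU.mem_nhds hx)) hq.contDiff.contDiffAt, hDq,
      Pi.zero_apply, sub_zero]
  have hsemi : sobSemi (m + d) p U (fun x => v x - q x) = sobSemi (m + d) p U v := by
    simp only [sobSemi_eq_eLpNorm]
    exact eLpNorm_congr_ae (ae_restrict_of_forall_mem hU.measurableSet hD_eq)
  rw [← hsemi, Nat.add_sub_cancel_left]
  exact sobSemi_le_pow_mul_sobSemi_add hU hU_bdd hdiam hρ hball hseg
    (hv.sub hq.contDiff.contDiffOn) hq_avg hp

end BrambleHilbert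

section NormEquivalence

lemma exists_norm_le_mul_norm_of_injective {V F G : Type*} [AddCommGroup V] [Module ℝ V]
    [FiniteDimensional ℝ V] [NormedAddCommGroup F] [NormedSpace ℝ F] [NormedAddCommGroup G]
    [NormedSpace ℝ G] {T : V →ₗ[ℝ] F} (hT : Function.Injective T) (S : V →ₗ[ℝ] G) :
    ∃ C : ℝ, 0 < C ∧ ∀ w, ‖S w‖ ≤ C * ‖T w‖ := by
  let e := LinearEquiv.ofInjective T hT
  let R := LinearMap.toContinuousLinearMap (S ∘ₗ e.symm.toLinearMap)
  obtain ⟨C, hC, hR⟩ := R.bound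
  exact ⟨C, hC, fun w => by simpa [R, e] using hR (e w)⟩

variable {E : Type*} [NormedAddCommGroup E] [NormedSpace ℝ E] {W : Submodule ℝ (E → ℝ)}

/-- The `m`-th derivative as a linear map from a space of `C^m` functions to the continuous
functions on a compact set, the latter with the sup norm. -/
def iteratedFDerivOn (m : ℕ) (K : Set E) (hW : ∀ w ∈ W, ContDiff ℝ m w) :
    W →ₗ[ℝ] C(K, E [×m]→L[ℝ] ℝ) where
  toFun w := ⟨fun x => iteratedFDeriv ℝ m w x,
    ((hW w w.2).continuous_iteratedFDeriv le_rfl).comp continuous_subtype_val⟩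
  map_add' w u := by
    ext1 x
    exact iteratedFDeriv_add_apply (hW w w.2).contDiffAt (hW u u.2).contDiffAt
  map_smul' a w := by
    ext1 x
    exact iteratedFDeriv_const_smul_apply (hW w w.2).contDiffAt

variable [MeasurableSpace E] [BorelSpace E] [FiniteDimensional ℝ E] {μ : Measure E}
  [IsFiniteMeasureOnCompacts μ] {B : Set E}

lemma memLp_restrict_of_continuous (hB : Bornology.IsBounded B) {w : E → ℝ} (hw : Continuous w)
    (p : ℝ≥0∞) : MemLp w p (μ.restrict B) := by
  have hcompact := hB.isCompact_closure
  obtain ⟨M, hM⟩ := hcompact.exists_bound_of_continuousOn hw.continuousOn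
  have : IsFiniteMeasure (μ.restrict (closure B)) := ⟨by simpa using hcompact.measure_lt_top⟩
  refine (MemLp.of_bound hw.aestronglyMeasurable M ?_).mono_measure
    (Measure.restrict_mono subset_closure le_rfl)
  exact ae_restrict_of_forall_mem isClosed_closure.measurableSet hM

/-- Restriction to a bounded set `B`, as a linear map from a space of continuous functions to
`L²(B)`. -/
def restrictToL2 (hB : Bornology.IsBounded B) (hW : ∀ w ∈ W, Continuous w) :
    W →ₗ[ℝ] Lp ℝ 2 (μ.restrict B) where
  toFun w := (memLp_restrict_of_continuous hB (hW w w.2) 2).toLp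
  map_add' _ _ := MemLp.toLp_add _ _
  map_smul' a _ := MemLp.toLp_const_smul a _

lemma norm_restrictToL2_sq (hB : Bornology.IsBounded B) (hW : ∀ w ∈ W, Continuous w) (w : W) :
    ‖restrictToL2 (μ := μ) hB hW w‖ ^ 2 = ∫ x in B, w.1 x ^ 2 ∂μ := by
  rw [← real_inner_self_eq_norm_sq, L2.inner_def]
  refine integral_congr_ae ?_
  filter_upwards [(memLp_restrict_of_continuous hB (hW w w.2) 2).coeFn_toLp] with x hx
  simp only [restrictToL2, LinearMap.coe_mk, AddHom.coe_mk, hx, real_inner_self_eq_norm_sq,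
    Real.norm_eq_abs, sq_abs]

lemma restrictToL2_injective [μ.IsOpenPosMeasure] (hB : Bornology.IsBounded B) (hB_open : IsOpen B)
    (hB_ne : B.Nonempty) (hW : ∀ w ∈ W, AnalyticOnNhd ℝ w univ) :
    Function.Injective (restrictToL2 (μ := μ) hB fun w hw => (hW w hw).continuous) := by
  refine (injective_iff_map_eq_zero _).2 fun w hw => Subtype.ext ?_
  have h_ae : w.1 =ᵐ[μ.restrict B] 0 :=
    (memLp_restrict_of_continuous hB (hW w w.2).continuous 2).coeFn_toLp.symm.trans
      ((Lp.ext_iff.1 hw).trans (Lp.coeFn_zero ℝ 2 _))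
  have h_eqOn : EqOn w.1 0 B :=
    Measure.eqOn_open_of_ae_eq h_ae hB_open (hW w w.2).continuous.continuousOn continuousOn_const
  obtain ⟨x, hx⟩ := hB_ne
  exact funext fun y => (hW w w.2).eqOn_zero_of_preconnected_of_eventuallyEq_zero
    isPreconnected_univ (mem_univ x) (h_eqOn.eventuallyEq_of_mem (hB_open.mem_nhds hx)) (mem_univ y)

lemma exists_norm_iteratedFDeriv_sq_le_setIntegral_sq [μ.IsOpenPosMeasure] [FiniteDimensional ℝ W]
    (hW : ∀ w ∈ W, AnalyticOnNhd ℝ w univ) {K : Set E} (hK : IsCompact K)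
    (hB : Bornology.IsBounded B) (hB_open : IsOpen B) (hB_ne : B.Nonempty) (s : ℕ) :
    ∃ C : ℝ, 0 < C ∧ ∀ w ∈ W, ∀ m ≤ s, ∀ x ∈ K,
      ‖iteratedFDeriv ℝ m w x‖ ^ 2 ≤ C * ∫ y in B, w y ^ 2 ∂μ := by
  have := isCompact_iff_compactSpace.1 hK
  have hW_smooth {m : ℕ} (w) (hw : w ∈ W) : ContDiff ℝ m w :=
    contDiff_iff_contDiffAt.2 fun x => (hW w hw x (mem_univ x)).contDiffAt
  obtain ⟨C, hC, hbound⟩ := exists_norm_le_mul_norm_of_injective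
    (G := ∀ m : Fin (s + 1), C(K, E [×m]→L[ℝ] ℝ))
    (restrictToL2_injective (μ := μ) hB hB_open hB_ne hW)
    (LinearMap.pi fun m : Fin (s + 1) => iteratedFDerivOn m K hW_smooth)
  refine ⟨C ^ 2, by positivity, fun w hw m hm x hx => ?_⟩
  rw [← norm_restrictToL2_sq hB (fun w hw => (hW w hw).continuous) ⟨w, hw⟩, ← mul_pow]
  gcongr
  calc ‖iteratedFDeriv ℝ m w x‖
      ≤ ‖iteratedFDerivOn m K hW_smooth ⟨w, hw⟩‖ :=
        (iteratedFDerivOn m K hW_smooth ⟨w, hw⟩).norm_coe_le_norm ⟨x, hx⟩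
    _ ≤ ‖LinearMap.pi (fun m : Fin (s + 1) => iteratedFDerivOn m K hW_smooth) ⟨w, hw⟩‖ :=
        norm_le_pi_norm (LinearMap.pi (fun m : Fin (s + 1) => iteratedFDerivOn m K hW_smooth)
          ⟨w, hw⟩) ⟨m, Nat.lt_succ_of_le hm⟩
    _ ≤ _ := hbound _

end NormEquivalence

section InverseInequality

variable {N k : ℕ} {w : EuclideanSpace ℝ (Fin N) → ℝ}

lemma iteratedFDeriv_comp_add_smul {E F : Type*} [NormedAddCommGroup E] [NormedSpace ℝ E]
    [NormedAddCommGroup F] [NormedSpace ℝ F] {f : E → F} {m : ℕ} (hf : ContDiff ℝ m f) (c x : E)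
    (h : ℝ) :
    iteratedFDeriv ℝ m (fun y => f (c + h • y)) x = h ^ m • iteratedFDeriv ℝ m f (c + h • x) := by
  rw [iteratedFDeriv_comp_const_smul (f := fun z => f (c + z)) h
    (hf.comp (contDiff_const.add contDiff_id))]
  simp only [iteratedFDeriv_comp_add_left]

lemma setIntegral_ball_comp_add_smul {E F : Type*} [NormedAddCommGroup E] [NormedSpace ℝ E]
    [MeasurableSpace E] [BorelSpace E] [FiniteDimensional ℝ E] [NormedAddCommGroup F]
    [NormedSpace ℝ F] (μ : Measure E) [μ.IsAddHaarMeasure] (f : E → F) (c : E) {h : ℝ} (hh : 0 < h)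
    (r : ℝ) :
    ∫ y in ball 0 r, f (c + h • y) ∂μ =
      (h ^ Module.finrank ℝ E)⁻¹ • ∫ y in ball c (r * h), f y ∂μ := by
  rw [Measure.setIntegral_comp_smul_of_pos μ (fun z => f (c + z)) _ hh, _root_.smul_ball hh.ne',
    smul_zero, Real.norm_of_nonneg hh.le,
    ← (measurePreserving_add_left μ c).setIntegral_preimage_emb (measurableEmbedding_addLeft c) f,
    preimage_add_ball, sub_self, mul_comm r]

lemma IsPolyDegLE.comp_add_smul (hw : IsPolyDegLE N k w) (c : EuclideanSpace ℝ (Fin N)) (h : ℝ) :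
    IsPolyDegLE N k fun x => w (c + h • x) := by
  simpa using hw.comp (l := 1) fun i =>
    ((const (c i)).mono zero_le_one).add ((coord i).const_mul h)

lemma exists_norm_iteratedFDeriv_sq_le_inv_mul_setIntegral_sq (N k s : ℕ) {r : ℝ} (hr : 0 < r) :
    ∃ C : ℝ, 0 < C ∧ ∀ w, IsPolyDegLE N k w → ∀ h : ℝ, 0 < h → ∀ c, ∀ m ≤ s, ∀ x ∈ closedBall c h,
      (h ^ m * ‖iteratedFDeriv ℝ m w x‖) ^ 2 ≤
        C * (h ^ N)⁻¹ * ∫ y in ball c (r * h), w y ^ 2 := by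
  obtain ⟨C, hC, hbound⟩ := exists_norm_iteratedFDeriv_sq_le_setIntegral_sq
    (μ := (volume : Measure (EuclideanSpace ℝ (Fin N)))) (W := polyDegLE N k)
    (fun w hw x _ => (mem_polyDegLE.1 hw).contDiff.contDiffAt.analyticAt)
    (isCompact_closedBall 0 1) isBounded_ball isOpen_ball (nonempty_ball.2 hr) s
  refine ⟨C, hC, fun w hw h hh c m hm x hx => ?_⟩
  have hξ : h⁻¹ • (x - c) ∈ closedBall (0 : EuclideanSpace ℝ (Fin N)) 1 := by
    rwa [mem_closedBall_zero_iff, norm_smul, norm_inv, Real.norm_of_nonneg hh.le,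
      inv_mul_le_iff₀ hh, mul_one, ← mem_closedBall_iff_norm]
  have hx_eq : c + h • h⁻¹ • (x - c) = x := by simp [smul_inv_smul₀ hh.ne']
  have := hbound _ (mem_polyDegLE.2 (hw.comp_add_smul c h)) m hm _ hξ
  rwa [iteratedFDeriv_comp_add_smul hw.contDiff, hx_eq, norm_smul, norm_pow,
    Real.norm_of_nonneg hh.le, setIntegral_ball_comp_add_smul volume (fun y => w y ^ 2) c hh,
    finrank_euclideanSpace_fin, smul_eq_mul, ← mul_assoc] at this

end InverseInequality

section L2Projection

variable {N k : ℕ} {U : Set (EuclideanSpace ℝ (Fin N))} {v P q : EuclideanSpace ℝ (Fin N) → ℝ}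

/-- `P` is the `L²(U)`-projection of `v` onto the polynomials of total degree at most `k`. -/
def IsL2Projection (k : ℕ) (U : Set (EuclideanSpace ℝ (Fin N)))
    (v P : EuclideanSpace ℝ (Fin N) → ℝ) : Prop :=
  IsPolyDegLE N k P ∧ ∀ q, IsPolyDegLE N k q → ∫ x in U, P x * q x = ∫ x in U, v x * q x

lemma IsPolyDegLE.integrableOn (hP : IsPolyDegLE N k P) (hU : Bornology.IsBounded U) :
    IntegrableOn P U :=
  memLp_one_iff_integrable.1 (memLp_restrict_of_continuous hU hP.continuous 1)

namespace IsL2Projection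

lemma sub (hP : IsL2Projection k U v P) (hU : Bornology.IsBounded U) (hv : IntegrableOn v U)
    (hq : IsPolyDegLE N k q) : IsL2Projection k U (fun x => v x - q x) fun x => P x - q x := by
  refine ⟨hP.1.sub hq, fun r hr => ?_⟩
  have integrableOn_mul {f : EuclideanSpace ℝ (Fin N) → ℝ} (hf : IntegrableOn f U volume) :
      IntegrableOn (fun x => f x * r x) U :=
    Integrable.mul_of_top_left hf
      (memLp_restrict_of_continuous hU hr.continuous ⊤)
  simp only [sub_mul]
  rw [integral_sub (integrableOn_mul (hP.1.integrableOn hU))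
    (integrableOn_mul (hq.integrableOn hU)), hP.2 r hr,
    integral_sub (integrableOn_mul hv) (integrableOn_mul (hq.integrableOn hU))]

lemma setIntegral_sq_le (hP : IsL2Projection k U v P) (hU : MeasurableSet U)
    (hv : IntegrableOn v U) {M : ℝ} (hM : ∀ x ∈ U, ‖P x‖ ≤ M) :
    ∫ x in U, P x ^ 2 ≤ M * ∫ x in U, ‖v x‖ := by
  simp only [sq, hP.2 P hP.1]
  rw [← integral_const_mul]
  refine (Real.le_norm_self _).trans
    (norm_integral_le_of_norm_le (hv.norm.const_mul M)
      (ae_restrict_of_forall_mem hU fun x hx => ?_))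
  rw [norm_mul, mul_comm]
  gcongr
  exact hM x hx

end IsL2Projection

-- Testing the projection against itself gives `‖P‖₂² ≤ ‖P‖_∞ ‖v‖₁`, while the inverse inequality
-- gives `‖P‖_∞² ≲ h⁻ᴺ ‖P‖₂²`; together `‖P‖_∞ ≲ h⁻ᴺ ‖v‖₁`.
lemma exists_norm_iteratedFDeriv_l2Projection_le (N k s : ℕ) {ρ : ℝ} (hρ : 0 < ρ) :
    ∃ C : ℝ, 0 < C ∧ ∀ (U : Set (EuclideanSpace ℝ (Fin N))) (c) (h : ℝ), MeasurableSet U → 0 < h →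
      ball c (ρ * h) ⊆ U → U ⊆ closedBall c h → ∀ v P, IntegrableOn v U → IsL2Projection k U v P →
        ∀ m ≤ s, ∀ x ∈ U,
          h ^ m * ‖iteratedFDeriv ℝ m P x‖ ≤ C * (h ^ N)⁻¹ * ∫ y in U, ‖v y‖ := by
  obtain ⟨C, hC, hbound⟩ := exists_norm_iteratedFDeriv_sq_le_inv_mul_setIntegral_sq N k s hρ
  refine ⟨C, hC, fun U c h hU hh hball hU_ball v P hv hP m hm x hx => ?_⟩
  set A := C * (h ^ N)⁻¹
  set I := ∫ y in U, P y ^ 2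
  have : 0 < A := by positivity
  have hP_sq : IntegrableOn (fun y => P y ^ 2) U :=
    (hP.1.continuous.pow 2).continuousOn.integrableOn_compact
      (isCompact_closedBall c h) |>.mono_set hU_ball
  have hsup (j) (hj : j ≤ s) (y) (hy : y ∈ U) : h ^ j * ‖iteratedFDeriv ℝ j P y‖ ≤ √(A * I) := by
    refine Real.le_sqrt_of_sq_le ((hbound P hP.1 h hh c j hj y (hU_ball hy)).trans ?_)
    gcongr
    exact setIntegral_mono_set hP_sq (ae_of_all _ fun _ => sq_nonneg _) hball.eventuallyLE
  refine (hsup m hm x hx).trans ?_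
  have hI : I ≤ √(A * I) * ∫ y in U, ‖v y‖ :=
    hP.setIntegral_sq_le hU hv fun y hy => by simpa using hsup 0 (Nat.zero_le s) y hy
  have : 0 ≤ I := integral_nonneg fun _ => sq_nonneg _
  rcases (Real.sqrt_nonneg (A * I)).eq_or_lt with h0 | hpos
  · rw [← h0]
    positivity
  · refine le_of_mul_le_mul_left ?_ hpos
    calc √(A * I) * √(A * I) = A * I := Real.mul_self_sqrt (by positivity)
      _ ≤ A * (√(A * I) * ∫ y in U, ‖v y‖) := by gcongr
      _ = √(A * I) * (A * ∫ y in U, ‖v y‖) := by ring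

lemma eLpNorm_le_mul_eLpNorm_of_enorm_le_lintegral {α F G : Type*} [MeasurableSpace α]
    {μ : Measure α} [NormedAddCommGroup F] [NormedAddCommGroup G] {f : α → F} {g : α → G}
    (hg : AEStronglyMeasurable g μ) {C p : ℝ≥0∞} (hp : 1 ≤ p)
    (hfg : ∀ᵐ x ∂μ, ‖f x‖ₑ ≤ C * ∫⁻ y, ‖g y‖ₑ ∂μ) :
    eLpNorm f p μ ≤ C * μ univ * eLpNorm g p μ := by
  have hp_inv : p.toReal⁻¹ ≤ 1 := by
    rw [← ENNReal.toReal_inv, ← ENNReal.toReal_one]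
    exact ENNReal.toReal_mono ENNReal.one_ne_top (ENNReal.inv_le_one.2 hp)
  calc eLpNorm f p μ
      ≤ μ univ ^ p.toReal⁻¹ * (C * eLpNorm g 1 μ) := by
        rw [eLpNorm_one_eq_lintegral_enorm, mul_comm]
        exact eLpNorm_le_of_ae_enorm_bound hfg
    _ ≤ μ univ ^ p.toReal⁻¹ * (C * (eLpNorm g p μ * μ univ ^ (1 - p.toReal⁻¹))) := by
        gcongr
        simpa using eLpNorm_le_eLpNorm_mul_rpow_measure_univ hp hg
    _ = C * (μ univ ^ p.toReal⁻¹ * μ univ ^ (1 - p.toReal⁻¹)) * eLpNorm g p μ := by ring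
    _ = C * μ univ * eLpNorm g p μ := by
        rw [← ENNReal.rpow_add_of_nonneg _ _ (by positivity) (sub_nonneg.2 hp_inv),
          add_sub_cancel, ENNReal.rpow_one]

lemma exists_sobSemi_l2Projection_le (N k s : ℕ) {ρ : ℝ} (hρ : 0 < ρ) :
    ∃ C : ℝ, 0 < C ∧ ∀ (U : Set (EuclideanSpace ℝ (Fin N))) (c) (h : ℝ), MeasurableSet U → 0 < h →
      ball c (ρ * h) ⊆ U → U ⊆ closedBall c h → ∀ v P, IntegrableOn v U → IsL2Projection k U v P →
        ∀ p : ℝ≥0∞, 1 ≤ p → ∀ m ≤ s,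
          sobSemi m p U P ≤ ENNReal.ofReal (C * (h ^ m)⁻¹) * eLpNorm v p (volume.restrict U) := by
  obtain ⟨C, hC, hbound⟩ := exists_norm_iteratedFDeriv_l2Projection_le N k s hρ
  set β := volume.real (closedBall (0 : EuclideanSpace ℝ (Fin N)) 1)
  have hβ : 0 < β :=
    ENNReal.toReal_pos (measure_closedBall_pos _ _ one_pos).ne' measure_closedBall_lt_top.ne
  refine ⟨C * β, by positivity, fun U c h hU hh hball hU_ball v P hv hP p hp m hm => ?_⟩
  have hU_volume : volume U ≤ ENNReal.ofReal (h ^ N * β) := by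
    refine (measure_mono hU_ball).trans_eq ?_
    rw [Measure.addHaar_closedBall' _ _ hh.le, finrank_euclideanSpace_fin,
      ENNReal.ofReal_mul (by positivity), ofReal_measureReal measure_closedBall_lt_top.ne]
  have henorm : ∀ᵐ x ∂volume.restrict U, ‖iteratedFDeriv ℝ m P x‖ₑ ≤
      ENNReal.ofReal ((h ^ m)⁻¹ * (C * (h ^ N)⁻¹)) * ∫⁻ y in U, ‖v y‖ₑ := by
    refine ae_restrict_of_forall_mem hU fun x hx => ?_
    rw [← ofReal_norm, ← ofReal_integral_norm_eq_lintegral_enorm hv,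
      ← ENNReal.ofReal_mul (by positivity), mul_assoc]
    gcongr
    rw [le_inv_mul_iff₀ (by positivity)]
    exact hbound U c h hU hh hball hU_ball v P hv hP m hm x hx
  rw [sobSemi_eq_eLpNorm]
  refine (eLpNorm_le_mul_eLpNorm_of_enorm_le_lintegral hv.aestronglyMeasurable hp henorm).trans ?_
  rw [Measure.restrict_apply_univ]
  gcongr
  calc _ ≤ ENNReal.ofReal ((h ^ m)⁻¹ * (C * (h ^ N)⁻¹)) * ENNReal.ofReal (h ^ N * β) := by gcongr
    _ = ENNReal.ofReal (C * β * (h ^ m)⁻¹) := by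
        rw [← ENNReal.ofReal_mul (by positivity)]
        congr 1
        field_simp

end L2Projection

section Approximation

variable {N : ℕ} {U : Set (EuclideanSpace ℝ (Fin N))} {v : EuclideanSpace ℝ (Fin N) → ℝ}

lemma exists_sobSemi_sub_l2Projection_le (N k s : ℕ) {ρ : ℝ} (hρ : 0 < ρ) :
    ∃ C : ℝ, 0 < C ∧ ∀ (U : Set (EuclideanSpace ℝ (Fin N))) (c), IsOpen U → Bornology.IsBounded U →
      0 < diam U → ball c (ρ * diam U) ⊆ U → ∀ v, ContDiffOn ℝ s v U → IntegrableOn v U →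
        ∀ P q, IsL2Projection k U v P → IsPolyDegLE N k q → ∀ p : ℝ≥0∞, 1 ≤ p → ∀ m ≤ s,
          sobSemi m p U (fun x => v x - P x) ≤ sobSemi m p U (fun x => v x - q x) +
            ENNReal.ofReal (C * (diam U ^ m)⁻¹) * sobSemi 0 p U (fun x => v x - q x) := by
  obtain ⟨C, hC, hstable⟩ := exists_sobSemi_l2Projection_le N k s hρ
  refine ⟨C, hC, fun U c hU hU_bdd hdiam hball v hv hv_int P q hP hq p hp m hm => ?_⟩
  have hU_ball : U ⊆ closedBall c (diam U) := fun x hx =>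
    dist_le_diam_of_mem hU_bdd hx (hball (mem_ball_self (by positivity)))
  have hv_sub_q : IntegrableOn (fun x => v x - q x) U := hv_int.sub (hq.integrableOn hU_bdd)
  have hsplit : (fun x => v x - P x) = fun x => (v x - q x) - (P x - q x) := by
    ext x
    ring
  rw [hsplit, sobSemi_zero]
  refine (sobSemi_sub_le hU ((hv.of_le (mod_cast hm)).sub hq.contDiff.contDiffOn)
    (hP.1.sub hq).contDiff.contDiffOn hp).trans ?_
  gcongr
  exact hstable U c _ hU.measurableSet hdiam hball hU_ball _ _ hv_sub_q (hP.sub hU_bdd hv_int hq)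
    p hp m hm

lemma integrableOn_of_sobSemi_ne_top (hU : IsOpen U) (hU_bdd : Bornology.IsBounded U)
    (hdiam : 0 < diam U) {ρ : ℝ} (hρ : 0 < ρ) (hstar : StarShapedWrtBall ρ U) {s : ℕ}
    (hv : ContDiffOn ℝ s v U) {p : ℝ≥0∞} (hp : 1 ≤ p) (hvs : sobSemi s p U v ≠ ⊤) :
    IntegrableOn v U := by
  obtain ⟨q, hq, hvq⟩ := bramble_hilbert hU hU_bdd hdiam hρ hstar hv
  have : IsFiniteMeasure (volume.restrict U) := ⟨by simpa using hU_bdd.measure_lt_top⟩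
  have hv_sub_q : MemLp (fun x => v x - q x) p (volume.restrict U) := by
    refine ⟨(hv.continuousOn.sub hq.continuous.continuousOn).aestronglyMeasurable
      hU.measurableSet, ?_⟩
    rw [← sobSemi_zero]
    exact (hvq p hp 0 s.zero_le).trans_lt (ENNReal.mul_lt_top ENNReal.ofReal_lt_top hvs.lt_top)
  simpa [IntegrableOn, Pi.add_def] using (hv_sub_q.integrable hp).add (hq.integrableOn hU_bdd)

lemma diam_pos_of_isOpen {X : Type*} [MetricSpace X] [∀ x : X, (nhdsWithin x {x}ᶜ).NeBot]
    {U : Set X} (hU : IsOpen U) (hU_bdd : Bornology.IsBounded U) (hU_ne : U.Nonempty) :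
    0 < diam U := by
  obtain ⟨x, hx⟩ := hU_ne
  exact Metric.diam_pos (infinite_of_mem_nhds x (hU.mem_nhds hx)).nontrivial hU_bdd

end Approximation

theorem wsp_approximation_of_l2_projection_general (N k : ℕ) (hN : 1 ≤ N) (s : ℕ) (hsk : s ≤ k + 1)
    (ρ : ℝ) (hρ : 0 < ρ) :
    ∃ C : ℝ, 0 < C ∧ ∀ p : ℝ≥0∞, 1 ≤ p → ∀ U : Set (EuclideanSpace ℝ (Fin N)), IsOpen U →
      Bornology.IsBounded U → StarShapedWrtBall ρ U → ∀ v, ContDiffOn ℝ s v U →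
        ∀ P, IsL2Projection k U v P → ∀ m ≤ s,
          sobSemi m p U (fun x => v x - P x) ≤
            ENNReal.ofReal (C * diam U ^ (s - m)) * sobSemi s p U v := by
  obtain ⟨C, hC, hquasi⟩ := exists_sobSemi_sub_l2Projection_le N k s hρ
  set A := max 1 ((4 / ρ) ^ N)
  refine ⟨A ^ s + C * A ^ s, by positivity, fun p hp U hU hU_bdd hstar v hv P hP m hm => ?_⟩
  rcases U.eq_empty_or_nonempty with rfl | hU_ne
  · simp [sobSemi]
  have : Nonempty (Fin N) := ⟨⟨0, hN⟩⟩
  have hdiam : 0 < diam U := diam_pos_of_isOpen hU hU_bdd hU_ne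
  rcases eq_or_ne (sobSemi s p U v) ⊤ with hv_top | hv_top
  · rw [hv_top, ENNReal.mul_top (by positivity)]
    exact le_top
  have ⟨c, hball, _⟩ := hstar
  have hv_int := integrableOn_of_sobSemi_ne_top hU hU_bdd hdiam hρ hstar hv hp hv_top
  obtain ⟨q, hq, hvq⟩ := bramble_hilbert hU hU_bdd hdiam hρ hstar hv
  have hvq' (j) (hj : j ≤ s) : sobSemi j p U (fun x => v x - q x) ≤
      ENNReal.ofReal (A ^ s * diam U ^ (s - j)) * sobSemi s p U v := by
    refine (hvq p hp j hj).trans ?_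
    rw [mul_pow]
    gcongr
    exact (pow_le_pow_left₀ (by positivity) (le_max_right _ _) _).trans
      (pow_le_pow_right₀ (le_max_left _ _) (Nat.sub_le s j))
  calc sobSemi m p U (fun x => v x - P x)
      ≤ sobSemi m p U (fun x => v x - q x) +
          ENNReal.ofReal (C * (diam U ^ m)⁻¹) * sobSemi 0 p U (fun x => v x - q x) :=
        hquasi U c hU hU_bdd hdiam hball v hv hv_int P q hP (hq.mono (by omega)) p hp m hm
    _ ≤ ENNReal.ofReal (A ^ s * diam U ^ (s - m)) * sobSemi s p U v +
          ENNReal.ofReal (C * (diam U ^ m)⁻¹) *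
            (ENNReal.ofReal (A ^ s * diam U ^ s) * sobSemi s p U v) := by
        gcongr
        exacts [hvq' m hm, hvq' 0 s.zero_le]
    _ = ENNReal.ofReal ((A ^ s + C * A ^ s) * diam U ^ (s - m)) * sobSemi s p U v := by
        rw [← mul_assoc, ← ENNReal.ofReal_mul (by positivity), ← add_mul,
          ← ENNReal.ofReal_add (by positivity) (by positivity), pow_sub₀ _ hdiam.ne' hm]
        congr 2
        ring

/-- $W^{s,p}$-approximation properties of $L^2$-projections on local polynomial spaces. -/
theorem wsp_approximation_of_l2_projection
    (N k : ℕ) (hN : 1 ≤ N) (s : ℕ) (hs : 1 ≤ s) (hsk : s ≤ k + 1)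
    (p : ℝ≥0∞) (hp : 1 ≤ p) (ρ : ℝ) (hρ : 0 < ρ) :
    ∃ C : ℝ, 0 < C ∧
      ∀ U : Set (EuclideanSpace ℝ (Fin N)),
        IsOpen U → Bornology.IsBounded U → StarShapedWrtBall ρ U →
        ∀ v : EuclideanSpace ℝ (Fin N) → ℝ,
          (∃ V, IsOpen V ∧ closure U ⊆ V ∧ ContDiffOn ℝ (⊤ : ℕ∞) v V) →
        ∀ P : EuclideanSpace ℝ (Fin N) → ℝ, IsPolyDegLE N k P →
          (∀ q : EuclideanSpace ℝ (Fin N) → ℝ, IsPolyDegLE N k q →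
            ∫ x in U, P x * q x = ∫ x in U, v x * q x) →
        ∀ m : ℕ, m ≤ s →
          sobSemi m p U (fun x => v x - P x)
            ≤ ENNReal.ofReal (C * Metric.diam U ^ (s - m)) * sobSemi s p U v := by
  obtain ⟨C, hC, hbound⟩ := wsp_approximation_of_l2_projection_general N k hN s hsk ρ hρ
  exact ⟨C, hC, fun U hU hU_bdd hstar v ⟨V, _, hUV, hv⟩ P hP hPv => hbound p hp U hU hU_bdd hstar v
    ((hv.mono (subset_closure.trans hUV)).of_le (mod_cast le_top)) P ⟨hP, hPv⟩⟩
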